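/- Let G be a finite simple graph and k a natural number. Suppose H is an induced subgraph of G obtained from G by a finite sequence of single-vertex deletions in which each deleted vertex has degree strictly less than k in the graph current at the time of its deletion, and suppose every vertex of H has degree at least k in H. Then the vertex set of H is exactly the k-core of G. In particular, the result of iteratively peeling vertices of degree less than k does not depend on the order of deletions. -/

import Mathlib

open scoped Classical

/-- The number of neighbors of `v` (in `G`) that lie in the vertex set `S`. -/
noncomputable def degIn {V : Type*} (G : SimpleGraph V) (S : Finset V) (v : V) : ℕ :=
  (S.filter (fun w => G.Adj v w)).card

/-- `S` is a set of vertices in which every vertex has at least `k` neighbors inside `S`. -/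
def IsCoreSet {V : Type*} (G : SimpleGraph V) (k : ℕ) (S : Finset V) : Prop :=
  ∀ v ∈ S, k ≤ degIn G S v

/-- The `k`-core of `G`: the union of all vertex sets in which every vertex has at least
`k` neighbors inside the set. -/
noncomputable def kCore {V : Type*} [Fintype V] (G : SimpleGraph V) (k : ℕ) : Finset V :=
  (Finset.univ.powerset.filter (IsCoreSet G k)).sup id

/-- The core value of a vertex `v`: the largest `k` such that `v` belongs to the `k`-core. -/
noncomputable def coreValue {V : Type*} [Fintype V] (G : SimpleGraph V) (v : V) : ℕ :=
  sSup {k : ℕ | v ∈ kCore G k}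

/-- `PeelsTo G k S T` holds if the vertex set `T` can be obtained from the vertex set `S`
(viewed as induced subgraphs of `G`) by a finite sequence of single-vertex deletions in which
each deleted vertex has degree strictly less than `k` in the induced subgraph current at the
time of its deletion. -/
inductive PeelsTo {V : Type*} [DecidableEq V] (G : SimpleGraph V) (k : ℕ) :
    Finset V → Finset V → Prop
  | refl (S : Finset V) : PeelsTo G k S S
  | step {S T : Finset V} (v : V) (hv : v ∈ S) (hdeg : degIn G S v < k)
      (h : PeelsTo G k (S.erase v) T) : PeelsTo G k S T

theorem degIn_mono {V : Type*} (G : SimpleGraph V) {S T : Finset V} (h : S ⊆ T) (v : V) :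
    degIn G S v ≤ degIn G T v :=
  Finset.card_le_card (Finset.filter_subset_filter _ h)

theorem PeelsTo.coreSet_subset {V : Type*} [DecidableEq V] {G : SimpleGraph V} {k : ℕ}
    {S T : Finset V} (h : PeelsTo G k S T) {C : Finset V} (hC : IsCoreSet G k C)
    (hCS : C ⊆ S) : C ⊆ T := by
  induction h with
  | refl S => exact hCS
  | step v hv hdeg h ih =>
    apply ih
    intro w hw
    refine Finset.mem_erase.2 ⟨?_, hCS hw⟩
    rintro rfl
    exact absurd ((hC w hw).trans (degIn_mono G hCS w)) (not_le.2 hdeg)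

theorem subset_kCore {V : Type*} [Fintype V] {G : SimpleGraph V} {k : ℕ} {A : Finset V}
    (hA : IsCoreSet G k A) : A ⊆ kCore G k :=
  Finset.le_sup (f := id) (Finset.mem_filter.2
    ⟨Finset.mem_powerset.2 (Finset.subset_univ A), hA⟩)

theorem kCore_subset {V : Type*} [Fintype V] {G : SimpleGraph V} {k : ℕ} {A : Finset V}
    (hA : ∀ C, IsCoreSet G k C → C ⊆ A) : kCore G k ⊆ A :=
  Finset.sup_le (f := id) (fun C hC => hA C (Finset.mem_filter.1 hC).2)

theorem peeling_gives_kCore {V : Type*} [Fintype V] [DecidableEq V]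
    (G : SimpleGraph V) (k : ℕ) (A : Finset V)
    (hpeel : PeelsTo G k Finset.univ A) (hdeg : ∀ v ∈ A, k ≤ degIn G A v) :
    A = kCore G k := by
  exact Finset.Subset.antisymm (subset_kCore hdeg)
    (kCore_subset fun C hC => hpeel.coreSet_subset hC (Finset.subset_univ C))
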